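/- (Reduction to and improvement over Anderson's bound on a two-ended support.) Let a < b, D⁺ := [a,b], α ∈ (0,1), and let ℓ ∈ [0,1]ⁿ with largest order statistic ℓ_{(n)} > 0; let i₀ := min{ i : ℓ_{(i)} > 0 }. Suppose P( U_{(i)} ≥ ℓ_{(i)} for all 1 ≤ i ≤ n ) = 1 − α, where U = (U_1,…,U_n) are i.i.d. Uniform(0,1) with order statistics U_{(1)} ≤ … ≤ U_{(n)}. Let x ∈ [a,b]ⁿ and use the ordering function T(y) := m_{D⁺}(y,ℓ). Then: (i) if a ≤ b − (b − m_{D⁺}(x,ℓ))/ℓ_{(i₀)}, then b^α_{D⁺,T}(x) = m_{D⁺}(x,ℓ); and (ii) if a > b − (b − m_{D⁺}(x,ℓ))/ℓ_{(i₀)} and n > i₀, then b^α_{D⁺,T}(x) < m_{D⁺}(x,ℓ). -/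

import Mathlib

open MeasureTheory Set

/-- The sorted rearrangement (order statistics) of a finite real vector:
`sortedVec x i` is the (i+1)-st order statistic `x_{(i+1)}` (0-indexed). -/
noncomputable def sortedVec {n : ℕ} (x : Fin n → ℝ) : Fin n → ℝ :=
  x ∘ ⇑(Tuple.sort x)

/-- The induced mean `m(x, ℓ) = s - ∑ ℓ_{(i)} (x_{(i+1)} - x_{(i)})`, with `x_{(n+1)} := s`. -/
noncomputable def inducedMean {n : ℕ} (s : ℝ) (x ℓ : Fin n → ℝ) : ℝ :=
  s - ∑ i : Fin n, sortedVec ℓ i * ((Fin.snoc (sortedVec x) s : Fin (n+1) → ℝ) i.succ - sortedVec x i)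

/-- `S_{D,T}(x) = {y ∈ Dⁿ : T y ≤ T x}`. -/
def SsetD {n : ℕ} (D : Set ℝ) (T : (Fin n → ℝ) → ℝ) (x : Fin n → ℝ) : Set (Fin n → ℝ) :=
  {y | (∀ i, y i ∈ D) ∧ T y ≤ T x}

/-- `b_{D,T}(x, u) = sup_{z ∈ S_{D,T}(x)} m_{sup D}(z, u)`. -/
noncomputable def bfun {n : ℕ} (D : Set ℝ) (T : (Fin n → ℝ) → ℝ) (x u : Fin n → ℝ) : ℝ :=
  sSup ((fun z => inducedMean (sSup D) z u) '' SsetD D T x)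

/-- The uniform probability measure on `[0,1]`. -/
noncomputable def unif01 : Measure ℝ := volume.restrict (Icc (0:ℝ) 1)

/-- The law of an i.i.d. sample of size `n` from Uniform(0,1). -/
noncomputable def unifPi (n : ℕ) : Measure (Fin n → ℝ) := Measure.pi fun _ => unif01

/-- The `p`-quantile of the random variable `Y` under `μ`:
`Q(p, Y) = inf {y : P(Y ≤ y) ≥ p}`. -/
noncomputable def rquantile {Ω : Type*} [MeasurableSpace Ω] (μ : Measure Ω)
    (Y : Ω → ℝ) (p : ℝ) : ℝ :=
  sInf {y : ℝ | ENNReal.ofReal p ≤ μ {ω | Y ω ≤ y}}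

/-- The upper confidence bound `b^α_{D,T}(x) = Q(1 - α, b_{D,T}(x, U))`, `U` i.i.d. Uniform(0,1). -/
noncomputable def ucb {n : ℕ} (D : Set ℝ) (T : (Fin n → ℝ) → ℝ) (α : ℝ)
    (x : Fin n → ℝ) : ℝ :=
  rquantile (unifPi n) (bfun D T x) (1 - α)

/-- The stairstep function `G_{x,ℓ}` with top value at `s`. -/
noncomputable def stairstep {n : ℕ} (s : ℝ) (x ℓ : Fin n → ℝ) (t : ℝ) : ℝ :=
  if s ≤ t then 1 else sSup ({0} ∪ (sortedVec ℓ '' {i | sortedVec x i ≤ t}))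

/-- The `k`-th smallest value (1-indexed) among `m 0, …, m (L-1)`. -/
noncomputable def kthSmallest {L : ℕ} (m : Fin L → ℝ) (k : ℕ) : ℝ :=
  sInf {y : ℝ | k ≤ Nat.card {j : Fin L // m j ≤ y}}

/-! For `L = ℓ_{(·)}` and `m = m(x, ℓ)`, the coverage event `{U_{(i)} ≥ L i for all i}` is contained
in `{b_{D,T}(x, U) ≤ m}`, because the induced mean decreases in its second argument.

In case (i) the vectors with `i + 1` entries (`i` counts from `0`) equal to `s - (s - m) / L i` and
the others equal to `s` lie in `S_{D,T}(x)` for every `i ≥ i₀`. They force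
`L i (s - y) ≤ U_{(i)} (s - m)` when `b_{D,T}(x, U) ≤ y`. For `y < m` this is the coverage event
with inflated thresholds, which misses a box just above `L`, so it has probability less than
`1 - α`.

In case (ii) every `z ∈ S_{D,T}(x)` has gaps beyond `i₀` with total bounded away from zero. Raising
`U_{(i)}` above `L i` for `i > i₀` therefore gains more than is lost by lowering `U_{(i₀)}` slightly
below `L i₀`. So `{b_{D,T}(x, U) < m}` contains, besides almost all of the coverage event, a box on
which coverage fails. -/

section OrderStatistics

variable {n : ℕ}

lemma sortedVec_mem {S : Set ℝ} {x : Fin n → ℝ} (hx : ∀ i, x i ∈ S) (i : Fin n) :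
    sortedVec x i ∈ S :=
  hx _

lemma monotone_sortedVec (x : Fin n → ℝ) : Monotone (sortedVec x) :=
  Tuple.monotone_sort x

lemma sortedVec_of_monotone {x : Fin n → ℝ} (hx : Monotone x) : sortedVec x = x := by
  rw [sortedVec, Tuple.sort_eq_refl_iff_monotone.2 hx, Equiv.coe_refl, Function.comp_id]

lemma exists_le_and_le_apply_of_injective {f : Fin n → Fin n} (hf : f.Injective) (k : Fin n) :
    ∃ j ≤ k, k ≤ f j := by
  by_contra! h
  have hcard : (Finset.Iic k).card ≤ (Finset.Iio k).card :=
    Finset.card_le_card_of_injOn f (fun j hj => by simpa using h j (by simpa using hj)) hf.injOn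
  rw [Fin.card_Iic, Fin.card_Iio] at hcard
  omega

lemma sortedVec_mono : Monotone (sortedVec : (Fin n → ℝ) → Fin n → ℝ) := by
  intro u v huv k
  obtain ⟨j, hjk, hkj⟩ := exists_le_and_le_apply_of_injective
    ((Tuple.sort u).symm.injective.comp (Tuple.sort v).injective) k
  calc sortedVec u k
      ≤ sortedVec u ((Tuple.sort u).symm (Tuple.sort v j)) := monotone_sortedVec u hkj
    _ = u (Tuple.sort v j) := congrArg u (Equiv.apply_symm_apply _ _)
    _ ≤ sortedVec v j := huv _
    _ ≤ sortedVec v k := monotone_sortedVec v hjk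

lemma sortedVec_mem_Icc_of_monotone {p q u : Fin n → ℝ} (hp : Monotone p) (hq : Monotone q)
    (hu : u ∈ Icc p q) (i : Fin n) : sortedVec u i ∈ Icc (p i) (q i) := by
  have hpu := sortedVec_mono hu.1 i
  have huq := sortedVec_mono hu.2 i
  rw [sortedVec_of_monotone hp] at hpu
  rw [sortedVec_of_monotone hq] at huq
  exact ⟨hpu, huq⟩

end OrderStatistics

section StepVector

variable {n : ℕ}

/-- The two-valued vector equal to `lo` at the indices up to and including `i`, and to `hi` after
`i`. It serves both as a sample and as a corner of a box of samples. -/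
def stepVec (i : Fin n) (lo hi : ℝ) (j : Fin n) : ℝ :=
  if j ≤ i then lo else hi

lemma stepVec_of_le {i j : Fin n} (h : j ≤ i) (lo hi : ℝ) : stepVec i lo hi j = lo :=
  if_pos h

lemma stepVec_of_lt {i j : Fin n} (h : i < j) (lo hi : ℝ) : stepVec i lo hi j = hi :=
  if_neg h.not_ge

lemma stepVec_mem {S : Set ℝ} {lo hi : ℝ} (hlo : lo ∈ S) (hhi : hi ∈ S) (i j : Fin n) :
    stepVec i lo hi j ∈ S := by
  unfold stepVec
  split_ifs <;> assumption

lemma monotone_stepVec (i : Fin n) {lo hi : ℝ} (h : lo ≤ hi) : Monotone (stepVec i lo hi) := by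
  intro j k hjk
  rcases le_or_gt k i with hk | hk
  · rw [stepVec_of_le hk, stepVec_of_le (hjk.trans hk)]
  · rw [stepVec_of_lt hk]
    exact stepVec_mem (S := Iic hi) h self_mem_Iic i j

end StepVector

section InducedMean

variable {n : ℕ} {s : ℝ} {x : Fin n → ℝ}

/-- The gap `x_{(i+1)} - x_{(i)}` between consecutive order statistics, with `x_{(n+1)} := s`: the
coefficient of `ℓ_{(i)}` in the induced mean. -/
noncomputable def gap (s : ℝ) (x : Fin n → ℝ) (i : Fin n) : ℝ :=
  (Fin.snoc (sortedVec x) s : Fin (n + 1) → ℝ) i.succ - sortedVec x i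

lemma inducedMean_eq_sub_sum_gap (s : ℝ) (x ℓ : Fin n → ℝ) :
    inducedMean s x ℓ = s - ∑ i, sortedVec ℓ i * gap s x i :=
  rfl

lemma snoc_apply_succ {β : Type*} (v : Fin n → β) (c : β) (i : Fin n) :
    (Fin.snoc v c : Fin (n + 1) → β) i.succ = if h : (i : ℕ) + 1 < n then v ⟨i + 1, h⟩ else c := by
  simp only [Fin.snoc, Fin.val_succ, cast_eq]
  rfl

lemma gap_nonneg (hx : ∀ i, x i ≤ s) (i : Fin n) : 0 ≤ gap s x i := by
  rw [gap, snoc_apply_succ, sub_nonneg]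
  split_ifs
  · exact monotone_sortedVec x (Fin.le_def.2 (Nat.le_succ _))
  · exact hx _

lemma sum_gap [NeZero n] (s : ℝ) (x : Fin n → ℝ) : ∑ i, gap s x i = s - sortedVec x 0 := by
  have hzero : (Fin.snoc (sortedVec x) s : Fin (n + 1) → ℝ) 0 = sortedVec x 0 :=
    Fin.snoc_castSucc (α := fun _ => ℝ) s (sortedVec x) 0
  have htail := Fin.sum_univ_succ (Fin.snoc (sortedVec x) s : Fin (n + 1) → ℝ)
  have hinit := Fin.sum_univ_castSucc (Fin.snoc (sortedVec x) s : Fin (n + 1) → ℝ)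
  simp only [Fin.snoc_castSucc, Fin.snoc_last] at hinit
  simp only [gap, Finset.sum_sub_distrib]
  linarith

lemma gap_le {a : ℝ} (hx : ∀ i, x i ∈ Icc a s) (i : Fin n) : gap s x i ≤ s - a := by
  have : NeZero n := i.neZero
  calc gap s x i
      ≤ ∑ j, gap s x j :=
        Finset.single_le_sum (fun j _ => gap_nonneg (fun k => (hx k).2) j) (Finset.mem_univ i)
    _ = s - sortedVec x 0 := sum_gap s x
    _ ≤ s - a := sub_le_sub_left (sortedVec_mem hx 0).1 s

lemma gap_stepVec (i : Fin n) {c : ℝ} (hc : c ≤ s) (j : Fin n) :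
    gap s (stepVec i c s) j = if j = i then s - c else 0 := by
  have hi := i.isLt
  have hj := j.isLt
  rw [gap, sortedVec_of_monotone (monotone_stepVec i hc), snoc_apply_succ]
  simp only [stepVec, Fin.le_def, Fin.ext_iff]
  split_ifs <;> first | omega | ring

lemma inducedMean_stepVec (i : Fin n) {c : ℝ} (hc : c ≤ s) (u : Fin n → ℝ) :
    inducedMean s (stepVec i c s) u = s - sortedVec u i * (s - c) := by
  simp [inducedMean_eq_sub_sum_gap, gap_stepVec i hc]

lemma inducedMean_le (hx : ∀ i, x i ≤ s) {u : Fin n → ℝ} (hu : ∀ i, 0 ≤ u i) :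
    inducedMean s x u ≤ s :=
  sub_le_self s <| Finset.sum_nonneg fun i _ => mul_nonneg (hu _) (gap_nonneg hx i)

lemma le_inducedMean [NeZero n] {a : ℝ} (hx : ∀ i, x i ∈ Icc a s) {u : Fin n → ℝ}
    (hu : ∀ i, u i ≤ 1) : a ≤ inducedMean s x u := by
  have hsum : ∑ i, sortedVec u i * gap s x i ≤ s - a :=
    calc ∑ i, sortedVec u i * gap s x i
        ≤ ∑ i, gap s x i := Finset.sum_le_sum fun i _ =>
          mul_le_of_le_one_left (gap_nonneg (fun k => (hx k).2) i) (hu _)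
      _ = s - sortedVec x 0 := sum_gap s x
      _ ≤ s - a := sub_le_sub_left (sortedVec_mem hx 0).1 s
  rw [inducedMean_eq_sub_sum_gap]
  linarith

lemma inducedMean_sub_inducedMean (s : ℝ) (x u v : Fin n → ℝ) :
    inducedMean s x u - inducedMean s x v =
      ∑ i, (sortedVec v i - sortedVec u i) * gap s x i := by
  simp only [inducedMean_eq_sub_sum_gap, sub_mul, Finset.sum_sub_distrib]
  ring

lemma inducedMean_anti (hx : ∀ i, x i ≤ s) {u v : Fin n → ℝ}
    (huv : ∀ i, sortedVec u i ≤ sortedVec v i) : inducedMean s x v ≤ inducedMean s x u := by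
  rw [← sub_nonpos, inducedMean_sub_inducedMean]
  exact Finset.sum_nonpos fun i _ =>
    mul_nonpos_of_nonpos_of_nonneg (sub_nonpos.2 (huv i)) (gap_nonneg hx i)

lemma sum_eq_sum_Iio_add_add_sum_Ioi {M : Type*} [AddCommMonoid M] (f : Fin n → M) (i : Fin n) :
    ∑ j, f j = ∑ j ∈ Finset.Iio i, f j + f i + ∑ j ∈ Finset.Ioi i, f j := by
  rw [Fintype.sum_eq_add_sum_compl i, ← Finset.Ioi_disjUnion_Iio, Finset.sum_disjUnion]
  abel

lemma sub_inducedMean_sub_le_sum_gap_Ioi {a : ℝ} (hx : ∀ i, x i ∈ Icc a s) {ℓ : Fin n → ℝ}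
    (hℓ : ∀ i, sortedVec ℓ i ≤ 1) {i₀ : Fin n} (hi₀ : 0 ≤ sortedVec ℓ i₀)
    (hlt : ∀ j < i₀, sortedVec ℓ j ≤ 0) :
    s - inducedMean s x ℓ - (s - a) * sortedVec ℓ i₀ ≤ ∑ i ∈ Finset.Ioi i₀, gap s x i := by
  have hg : ∀ i, 0 ≤ gap s x i := gap_nonneg fun i => (hx i).2
  have hbelow : ∑ i ∈ Finset.Iio i₀, sortedVec ℓ i * gap s x i ≤ 0 :=
    Finset.sum_nonpos fun i hi =>
      mul_nonpos_of_nonpos_of_nonneg (hlt i (Finset.mem_Iio.1 hi)) (hg i)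
  have hat : sortedVec ℓ i₀ * gap s x i₀ ≤ sortedVec ℓ i₀ * (s - a) :=
    mul_le_mul_of_nonneg_left (gap_le hx i₀) hi₀
  have habove : ∑ i ∈ Finset.Ioi i₀, sortedVec ℓ i * gap s x i ≤ ∑ i ∈ Finset.Ioi i₀, gap s x i :=
    Finset.sum_le_sum fun i _ => mul_le_of_le_one_left (hg i) (hℓ i)
  rw [inducedMean_eq_sub_sum_gap, sum_eq_sum_Iio_add_add_sum_Ioi _ i₀]
  linarith

lemma inducedMean_le_add_sub_sum_gap_Ioi (hx : ∀ i, x i ≤ s) {ℓ u : Fin n → ℝ} {i₀ : Fin n}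
    {η δ : ℝ} (hlt : ∀ i < i₀, sortedVec ℓ i ≤ sortedVec u i)
    (hi₀ : sortedVec ℓ i₀ - η ≤ sortedVec u i₀)
    (hgt : ∀ i, i₀ < i → sortedVec ℓ i + δ ≤ sortedVec u i) :
    inducedMean s x u ≤
      inducedMean s x ℓ + η * gap s x i₀ - δ * ∑ i ∈ Finset.Ioi i₀, gap s x i := by
  have hg : ∀ i, 0 ≤ gap s x i := gap_nonneg hx
  have hbelow : ∑ i ∈ Finset.Iio i₀, (sortedVec ℓ i - sortedVec u i) * gap s x i ≤ 0 :=
    Finset.sum_nonpos fun i hi =>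
      mul_nonpos_of_nonpos_of_nonneg (sub_nonpos.2 (hlt i (Finset.mem_Iio.1 hi))) (hg i)
  have hat : (sortedVec ℓ i₀ - sortedVec u i₀) * gap s x i₀ ≤ η * gap s x i₀ :=
    mul_le_mul_of_nonneg_right (by linarith) (hg i₀)
  have habove : ∑ i ∈ Finset.Ioi i₀, (sortedVec ℓ i - sortedVec u i) * gap s x i ≤
      ∑ i ∈ Finset.Ioi i₀, -δ * gap s x i :=
    Finset.sum_le_sum fun i hi => mul_le_mul_of_nonneg_right
      (by linarith [hgt i (Finset.mem_Ioi.1 hi)]) (hg i)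
  have hdiff := inducedMean_sub_inducedMean s x u ℓ
  rw [sum_eq_sum_Iio_add_add_sum_Ioi _ i₀] at hdiff
  rw [← Finset.mul_sum] at habove
  linarith

end InducedMean

section WorstCaseMean

variable {n : ℕ} {D : Set ℝ} {s : ℝ} {T : (Fin n → ℝ) → ℝ} {x u ℓ : Fin n → ℝ}

lemma self_mem_SsetD (hx : ∀ i, x i ∈ D) : x ∈ SsetD D T x :=
  ⟨hx, le_rfl⟩

lemma inducedMean_le_bfun (hD : IsLUB D s) (hu : ∀ i, 0 ≤ u i) {z : Fin n → ℝ}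
    (hz : z ∈ SsetD D T x) : inducedMean s z u ≤ bfun D T x u := by
  rw [bfun, hD.csSup_eq hD.nonempty]
  refine le_csSup ⟨s, ?_⟩ (mem_image_of_mem _ hz)
  rintro _ ⟨w, hw, rfl⟩
  exact inducedMean_le (fun i => hD.1 (hw.1 i)) hu

lemma bfun_le (hD : IsLUB D s) (hx : ∀ i, x i ∈ D) {y : ℝ}
    (h : ∀ z ∈ SsetD D T x, inducedMean s z u ≤ y) : bfun D T x u ≤ y := by
  rw [bfun, hD.csSup_eq hD.nonempty]
  exact csSup_le ⟨_, mem_image_of_mem _ (self_mem_SsetD hx)⟩ (forall_mem_image.2 h)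

lemma bfun_inducedMean_le (hD : IsLUB D s) (hx : ∀ i, x i ∈ D)
    (hℓu : ∀ i, sortedVec ℓ i ≤ sortedVec u i) :
    bfun D (inducedMean s · ℓ) x u ≤ inducedMean s x ℓ :=
  bfun_le hD hx fun _ hz => (inducedMean_anti (fun i => hD.1 (hz.1 i)) hℓu).trans hz.2

lemma mul_sub_le_of_bfun_inducedMean_le (hD : IsLUB D s) (hs : s ∈ D) {i : Fin n}
    (hi : 0 < sortedVec ℓ i) (hstep : s - (s - inducedMean s x ℓ) / sortedVec ℓ i ∈ D)
    (hu : ∀ j, 0 ≤ u j) {y : ℝ} (hy : bfun D (inducedMean s · ℓ) x u ≤ y) :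
    sortedVec ℓ i * (s - y) ≤ sortedVec u i * (s - inducedMean s x ℓ) := by
  set c := s - (s - inducedMean s x ℓ) / sortedVec ℓ i with hc
  have hsub : sortedVec ℓ i * (s - c) = s - inducedMean s x ℓ := by
    rw [hc, sub_sub_cancel, mul_div_cancel₀ _ hi.ne']
  have hmem : stepVec i c s ∈ SsetD D (inducedMean s · ℓ) x := by
    refine ⟨stepVec_mem hstep hs i, ?_⟩
    simp only [inducedMean_stepVec i (hD.1 hstep), hsub, sub_sub_cancel, le_refl]
  have hle : s - sortedVec u i * (s - c) ≤ y :=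
    inducedMean_stepVec i (hD.1 hstep) u ▸ (inducedMean_le_bfun hD hu hmem).trans hy
  calc sortedVec ℓ i * (s - y)
      ≤ sortedVec ℓ i * (sortedVec u i * (s - c)) :=
        mul_le_mul_of_nonneg_left (by linarith) hi.le
    _ = sortedVec u i * (s - inducedMean s x ℓ) := by rw [mul_left_comm, hsub]

lemma bfun_inducedMean_lt {a : ℝ} (hD : IsLUB D s) (ha : a ∈ lowerBounds D) (hx : ∀ i, x i ∈ D)
    (hℓ : ∀ i, sortedVec ℓ i ≤ 1) {i₀ : Fin n} (hi₀ : 0 ≤ sortedVec ℓ i₀)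
    (hi₀min : ∀ j < i₀, sortedVec ℓ j ≤ 0) {η δ : ℝ} (hη : 0 ≤ η) (hδ : 0 ≤ δ)
    (hηδ : (s - a) * η < δ * (s - inducedMean s x ℓ - (s - a) * sortedVec ℓ i₀))
    (hlt : ∀ i < i₀, sortedVec ℓ i ≤ sortedVec u i)
    (hat : sortedVec ℓ i₀ - η ≤ sortedVec u i₀)
    (hgt : ∀ i, i₀ < i → sortedVec ℓ i + δ ≤ sortedVec u i) :
    bfun D (inducedMean s · ℓ) x u < inducedMean s x ℓ := by
  set m := inducedMean s x ℓ
  set κ := s - m - (s - a) * sortedVec ℓ i₀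
  refine lt_of_le_of_lt (b := m + (s - a) * η - δ * κ) (bfun_le hD hx fun z hz => ?_)
    (by linarith)
  have hzD : ∀ i, z i ∈ Icc a s := fun i => ⟨ha (hz.1 i), hD.1 (hz.1 i)⟩
  have hzm : inducedMean s z ℓ ≤ m := hz.2
  have hκ : κ ≤ ∑ i ∈ Finset.Ioi i₀, gap s z i :=
    (by linarith : κ ≤ s - inducedMean s z ℓ - (s - a) * sortedVec ℓ i₀).trans
      (sub_inducedMean_sub_le_sum_gap_Ioi hzD hℓ hi₀ hi₀min)
  calc inducedMean s z u
      ≤ inducedMean s z ℓ + η * gap s z i₀ - δ * ∑ i ∈ Finset.Ioi i₀, gap s z i :=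
        inducedMean_le_add_sub_sum_gap_Ioi (fun i => (hzD i).2) hlt hat hgt
    _ ≤ m + η * (s - a) - δ * κ := by
        gcongr
        exact gap_le hzD i₀
    _ = m + (s - a) * η - δ * κ := by ring

end WorstCaseMean

section Quantile

variable {Ω : Type*} [MeasurableSpace Ω] {μ : Measure Ω}

lemma measure_lt_measure_of_disjoint [IsFiniteMeasure μ] {A B C : Set Ω} (hB : MeasurableSet B)
    (hAB : Disjoint A B) (hAC : A ⊆ C) (hBC : B ⊆ C) (hpos : 0 < μ B) : μ A < μ C :=
  calc μ A < μ A + μ B := ENNReal.lt_add_right (measure_ne_top μ A) hpos.ne'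
    _ = μ (A ∪ B) := (measure_union hAB hB).symm
    _ ≤ μ C := measure_mono (union_subset hAC hBC)

lemma rquantile_eq {Y : Ω → ℝ} {p c : ℝ} (hc : ENNReal.ofReal p ≤ μ {ω | Y ω ≤ c})
    (hlt : ∀ y < c, μ {ω | Y ω ≤ y} < ENNReal.ofReal p) : rquantile μ Y p = c :=
  IsLeast.csInf_eq ⟨hc, fun y hy => le_of_not_gt fun hyc => (hlt y hyc).not_ge hy⟩

lemma exists_lt_lt_measure_le {Y : Ω → ℝ} {c : ℝ} {r : ENNReal} (h : r < μ {ω | Y ω < c}) :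
    ∃ y < c, r < μ {ω | Y ω ≤ y} := by
  obtain ⟨v, hv_mono, hv_lt, hv_tendsto⟩ := exists_seq_strictMono_tendsto c
  have hunion : {ω | Y ω < c} = ⋃ k, Y ⁻¹' Iic (v k) := by
    rw [← preimage_iUnion, iUnion_Iic_eq_Iio_of_lt_of_tendsto hv_lt hv_tendsto]
    rfl
  have hmono : Monotone fun k => Y ⁻¹' Iic (v k) :=
    fun j k hjk => preimage_mono (Iic_subset_Iic.2 (hv_mono.monotone hjk))
  rw [hunion, hmono.measure_iUnion, lt_iSup_iff] at h
  obtain ⟨k, hk⟩ := h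
  exact ⟨v k, hv_lt k, hk⟩

lemma rquantile_lt {Y : Ω → ℝ} {p a c : ℝ} (hp : 0 < p) (ha : ∀ᵐ ω ∂μ, a ≤ Y ω)
    (h : ENNReal.ofReal p < μ {ω | Y ω < c}) : rquantile μ Y p < c := by
  obtain ⟨y, hyc, hy⟩ := exists_lt_lt_measure_le h
  -- Without a lower bound on the levels, `sInf` would take its junk value `0`.
  have hbdd : BddBelow {y | ENNReal.ofReal p ≤ μ {ω | Y ω ≤ y}} := by
    refine ⟨a, fun t ht => le_of_not_gt fun hta => ?_⟩
    have hnull : μ {ω | Y ω ≤ t} = 0 :=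
      measure_eq_zero_iff_ae_notMem.2 (ha.mono fun ω hω => (hta.trans_le hω).not_ge)
    exact (ENNReal.ofReal_pos.2 hp).not_ge (hnull ▸ ht)
  exact (csInf_le hbdd hy.le).trans_lt hyc

end Quantile

section UniformSample

variable {n : ℕ}

instance isProbabilityMeasure_unif01 : IsProbabilityMeasure unif01 :=
  ⟨by simp [unif01]⟩

instance nullSingletonClass_unif01 : NullSingletonClass unif01 :=
  inferInstanceAs (NullSingletonClass (volume.restrict (Icc (0 : ℝ) 1)))

instance isProbabilityMeasure_unifPi (n : ℕ) : IsProbabilityMeasure (unifPi n) :=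
  inferInstanceAs (IsProbabilityMeasure (Measure.pi fun _ => unif01))

lemma ae_unifPi_mem_Icc (n : ℕ) : ∀ᵐ u ∂unifPi n, ∀ i, u i ∈ Icc (0 : ℝ) 1 :=
  ae_all_iff.2 fun _ => Measure.tendsto_eval_ae_ae.eventually (ae_restrict_mem measurableSet_Icc)

lemma ae_unifPi_sortedVec_ne (c : Fin n → ℝ) : ∀ᵐ u ∂unifPi n, ∀ i, sortedVec u i ≠ c i := by
  have hne : ∀ᵐ u ∂unifPi n, ∀ i j, u j ≠ c i :=
    ae_all_iff.2 fun i => ae_all_iff.2 fun j => Measure.ae_eval_ne (fun _ => unif01) j (c i)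
  exact hne.mono fun u hu i => hu i _

lemma unifPi_Icc_pos {p q : Fin n → ℝ} (hp : ∀ i, 0 ≤ p i) (hpq : ∀ i, p i < q i)
    (hq : ∀ i, q i ≤ 1) : 0 < unifPi n (Icc p q) := by
  rw [unifPi, ← pi_univ_Icc, Measure.pi_pi, pos_iff_ne_zero, Finset.prod_ne_zero_iff]
  intro i _
  rw [unif01, Measure.restrict_apply measurableSet_Icc,
    inter_eq_left.2 (Icc_subset_Icc (hp i) (hq i)), Real.volume_Icc]
  exact (ENNReal.ofReal_pos.2 (sub_pos.2 (hpq i))).ne'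

lemma exists_measurableSet_unifPi_pos_sortedVec (k : Fin n) {p q r : ℝ} (hp : 0 ≤ p) (hpq : p < q)
    (hqr : q ≤ r) (hr : r < 1) :
    ∃ B : Set (Fin n → ℝ), MeasurableSet B ∧ 0 < unifPi n B ∧
      (∀ u ∈ B, ∀ i ≤ k, sortedVec u i ∈ Icc p q) ∧ ∀ u ∈ B, ∀ i, k < i → r ≤ sortedVec u i := by
  have hsorted (u) (hu : u ∈ Icc (stepVec k p r) (stepVec k q 1)) := sortedVec_mem_Icc_of_monotone
    (monotone_stepVec k (hpq.le.trans hqr)) (monotone_stepVec k (hqr.trans hr.le)) hu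
  refine ⟨Icc (stepVec k p r) (stepVec k q 1), measurableSet_Icc, ?_,
    fun u hu i hi => ?_, fun u hu i hi => ?_⟩
  · refine unifPi_Icc_pos (stepVec_mem (S := Ici 0) hp (hp.trans (hpq.le.trans hqr)) k)
      (fun i => ?_) (stepVec_mem (S := Iic 1) (hqr.trans hr.le) self_mem_Iic k)
    rcases le_or_gt i k with hi | hi
    · simpa only [stepVec_of_le hi] using hpq
    · simpa only [stepVec_of_lt hi] using hr
  · simpa only [stepVec_of_le hi] using hsorted u hu i
  · simpa only [stepVec_of_lt hi] using (hsorted u hu i).1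

lemma sortedVec_lt_one_of_unifPi_ne_zero {ℓ : Fin n → ℝ}
    (h : unifPi n {u | ∀ i, sortedVec ℓ i ≤ sortedVec u i} ≠ 0) (i : Fin n) :
    sortedVec ℓ i < 1 := by
  contrapose! h
  rw [measure_eq_zero_iff_ae_notMem]
  filter_upwards [ae_unifPi_mem_Icc n, ae_unifPi_sortedVec_ne fun _ => 1] with u hu hne hcov
  exact hne i (le_antisymm (sortedVec_mem hu i).2 (h.trans (hcov i)))

end UniformSample

section AndersonBound

variable {n : ℕ} {D : Set ℝ} {s α : ℝ} {x ℓ : Fin n → ℝ} {i₀ : Fin n}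

lemma unifPi_inflated_lt_unifPi_coverage (hℓ : ∀ i, 0 ≤ ℓ i) (hℓ1 : ∀ i, sortedVec ℓ i < 1)
    (hi₀pos : 0 < sortedVec ℓ i₀) (hi₀min : ∀ j < i₀, sortedVec ℓ j ≤ 0) {A B : ℝ} (hB : 0 ≤ B)
    (hBA : B < A) :
    unifPi n {u | (∀ i, 0 ≤ u i) ∧ ∀ i, i₀ ≤ i → sortedVec ℓ i * A ≤ sortedVec u i * B} <
      unifPi n {u | ∀ i, sortedVec ℓ i ≤ sortedVec u i} := by
  obtain ⟨ε₁, hε₁, hℓε₁⟩ := Pi.exists_forall_pos_add_lt hℓ1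
  obtain ⟨ε₂, hε₂, hBε₂⟩ := exists_pos_mul_lt (mul_pos hi₀pos (sub_pos.2 hBA)) B
  set ε := min ε₁ ε₂
  set box := Icc (sortedVec ℓ) (fun i => sortedVec ℓ i + ε)
  have hbox : ∀ u ∈ box, ∀ i, sortedVec u i ∈ Icc (sortedVec ℓ i) (sortedVec ℓ i + ε) :=
    fun u => sortedVec_mem_Icc_of_monotone (monotone_sortedVec ℓ)
      ((monotone_sortedVec ℓ).add_const ε)
  have hboxpos : 0 < unifPi n box :=
    unifPi_Icc_pos (sortedVec_mem hℓ) (fun i => lt_add_of_pos_right _ (lt_min hε₁ hε₂))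
      fun i => (add_le_add_right (min_le_left _ _) _).trans (hℓε₁ i).le
  refine measure_lt_measure_of_disjoint measurableSet_Icc (disjoint_left.2 fun u hu hub => ?_)
    (fun u hu i => ?_) (fun u hu i => (hbox u hu i).1) hboxpos
  · refine lt_irrefl (sortedVec ℓ i₀ * A) ?_
    calc sortedVec ℓ i₀ * A
        ≤ sortedVec u i₀ * B := hu.2 i₀ le_rfl
      _ ≤ (sortedVec ℓ i₀ + ε₂) * B := by
          gcongr
          exact (hbox u hub i₀).2.trans (by gcongr; exact min_le_right _ _)
      _ < sortedVec ℓ i₀ * A := by linarith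
  · rcases lt_or_ge i i₀ with hi | hi
    · exact (hi₀min i hi).trans (hu.1 _)
    · refine le_of_not_gt fun hlt => lt_irrefl (sortedVec ℓ i * B) ?_
      calc sortedVec ℓ i * B
          < sortedVec ℓ i * A :=
            mul_lt_mul_of_pos_left hBA (hi₀pos.trans_le (monotone_sortedVec ℓ hi))
        _ ≤ sortedVec u i * B := hu.2 i hi
        _ ≤ sortedVec ℓ i * B := by gcongr

lemma unifPi_bfun_inducedMean_le_lt (hD : IsLUB D s) (hs : s ∈ D) (hℓ : ∀ i, 0 ≤ ℓ i)
    (hℓ1 : ∀ i, sortedVec ℓ i < 1) (hi₀pos : 0 < sortedVec ℓ i₀)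
    (hi₀min : ∀ j < i₀, sortedVec ℓ j ≤ 0) (hm : inducedMean s x ℓ ≤ s)
    (hstep : ∀ i, i₀ ≤ i → s - (s - inducedMean s x ℓ) / sortedVec ℓ i ∈ D)
    {y : ℝ} (hy : y < inducedMean s x ℓ) :
    unifPi n {u | bfun D (inducedMean s · ℓ) x u ≤ y} <
      unifPi n {u | ∀ i, sortedVec ℓ i ≤ sortedVec u i} := by
  refine (measure_mono_ae ?_).trans_lt (unifPi_inflated_lt_unifPi_coverage hℓ hℓ1 hi₀pos hi₀min
    (sub_nonneg.2 hm) (sub_lt_sub_left hy s))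
  filter_upwards [ae_unifPi_mem_Icc n] with u hu huy
  exact ⟨fun i => (hu i).1, fun i hi => mul_sub_le_of_bfun_inducedMean_le hD hs
    (hi₀pos.trans_le (monotone_sortedVec ℓ hi)) (hstep i hi) (fun j => (hu j).1) huy⟩

lemma unifPi_coverage_le_unifPi_forall_lt (ℓ : Fin n → ℝ) :
    unifPi n {u | ∀ i, sortedVec ℓ i ≤ sortedVec u i} ≤
      unifPi n {u | ∀ i, sortedVec ℓ i < sortedVec u i} := by
  refine measure_mono_ae ?_
  filter_upwards [ae_unifPi_sortedVec_ne (sortedVec ℓ)] with u hne hu i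
  exact (hu i).lt_of_ne (hne i).symm

lemma unifPi_coverage_lt_unifPi_bfun_lt {a : ℝ} (hD : IsLUB D s) (ha : a ∈ lowerBounds D)
    (hx : ∀ i, x i ∈ D) (hℓ1 : ∀ i, sortedVec ℓ i < 1) (hi₀pos : 0 < sortedVec ℓ i₀)
    (hi₀min : ∀ j < i₀, sortedVec ℓ j ≤ 0)
    (hm : (s - a) * sortedVec ℓ i₀ < s - inducedMean s x ℓ) :
    unifPi n {u | ∀ i, sortedVec ℓ i ≤ sortedVec u i} <
      unifPi n {u | bfun D (inducedMean s · ℓ) x u < inducedMean s x ℓ} := by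
  obtain ⟨ε, hε, hℓε⟩ := Pi.exists_forall_pos_add_lt hℓ1
  obtain ⟨η₀, hη₀, hη₀ε⟩ := exists_pos_mul_lt (mul_pos (half_pos hε) (sub_pos.2 hm)) (s - a)
  set η := min η₀ (sortedVec ℓ i₀)
  have hη : 0 < η := lt_min hη₀ hi₀pos
  have hηℓ : η ≤ sortedVec ℓ i₀ := min_le_right _ _
  have hηε : (s - a) * η < ε / 2 * (s - inducedMean s x ℓ - (s - a) * sortedVec ℓ i₀) :=
    (mul_le_mul_of_nonneg_left (min_le_left _ _)
      (sub_nonneg.2 ((ha (hx i₀)).trans (hD.1 (hx i₀))))).trans_lt hη₀ε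
  obtain ⟨B, hB, hBpos, hBle, hBgt⟩ := exists_measurableSet_unifPi_pos_sortedVec i₀
    (sub_nonneg.2 hηℓ) (sub_lt_self _ hη) (by linarith [hℓε i₀]) (sub_lt_self 1 (half_pos hε))
  refine (unifPi_coverage_le_unifPi_forall_lt ℓ).trans_lt <|
    measure_lt_measure_of_disjoint hB
      (disjoint_left.2 fun u hu huB => (hu i₀).not_ge (hBle u huB i₀ le_rfl).2)
      (fun u hu => ?_) (fun u hu => ?_) hBpos
  · obtain ⟨δ, hδ, hℓδ⟩ := Pi.exists_forall_pos_add_lt hu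
    exact bfun_inducedMean_lt hD ha hx (fun i => (hℓ1 i).le) hi₀pos.le hi₀min le_rfl hδ.le
      (by simpa only [mul_zero] using mul_pos hδ (sub_pos.2 hm)) (fun i _ => (hu i).le)
      (by simpa only [sub_zero] using (hu i₀).le) fun i _ => (hℓδ i).le
  · exact bfun_inducedMean_lt hD ha hx (fun i => (hℓ1 i).le) hi₀pos.le hi₀min hη.le
      (half_pos hε).le hηε
      (fun i hi => (hi₀min i hi).trans ((sub_nonneg.2 hηℓ).trans (hBle u hu i hi.le).1))
      (hBle u hu i₀ le_rfl).1
      fun i hi => by linarith [hBgt u hu i hi, hℓε i]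

theorem ucb_inducedMean_eq (hα : α < 1) (hD : IsLUB D s) (hs : s ∈ D) (hx : ∀ i, x i ∈ D)
    (hℓ : ∀ i, 0 ≤ ℓ i) (hi₀pos : 0 < sortedVec ℓ i₀) (hi₀min : ∀ j < i₀, sortedVec ℓ j ≤ 0)
    (hcov : unifPi n {u | ∀ i, sortedVec ℓ i ≤ sortedVec u i} = ENNReal.ofReal (1 - α))
    (hstep : ∀ i, i₀ ≤ i → s - (s - inducedMean s x ℓ) / sortedVec ℓ i ∈ D) :
    ucb D (inducedMean s · ℓ) α x = inducedMean s x ℓ := by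
  have hℓ1 : ∀ i, sortedVec ℓ i < 1 := sortedVec_lt_one_of_unifPi_ne_zero
    (hcov ▸ (ENNReal.ofReal_pos.2 (sub_pos.2 hα)).ne')
  have hm : inducedMean s x ℓ ≤ s := inducedMean_le (fun i => hD.1 (hx i)) hℓ
  refine rquantile_eq ?_ fun y hy => ?_
  · rw [← hcov]
    exact measure_mono fun u hu => bfun_inducedMean_le hD hx hu
  · rw [← hcov]
    exact unifPi_bfun_inducedMean_le_lt hD hs hℓ hℓ1 hi₀pos hi₀min hm hstep hy

theorem ucb_inducedMean_lt {a : ℝ} (hα : α < 1) (hD : IsLUB D s) (ha : a ∈ lowerBounds D)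
    (hx : ∀ i, x i ∈ D) (hi₀pos : 0 < sortedVec ℓ i₀) (hi₀min : ∀ j < i₀, sortedVec ℓ j ≤ 0)
    (hcov : unifPi n {u | ∀ i, sortedVec ℓ i ≤ sortedVec u i} = ENNReal.ofReal (1 - α))
    (hm : s - (s - inducedMean s x ℓ) / sortedVec ℓ i₀ < a) :
    ucb D (inducedMean s · ℓ) α x < inducedMean s x ℓ := by
  have : NeZero n := i₀.neZero
  have hp : 0 < 1 - α := sub_pos.2 hα
  have hℓ1 : ∀ i, sortedVec ℓ i < 1 := sortedVec_lt_one_of_unifPi_ne_zero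
    (hcov ▸ (ENNReal.ofReal_pos.2 hp).ne')
  refine rquantile_lt (a := a) hp ?_ (hcov ▸ unifPi_coverage_lt_unifPi_bfun_lt hD ha hx hℓ1 hi₀pos
    hi₀min ((lt_div_iff₀ hi₀pos).1 (sub_lt_comm.1 hm)))
  filter_upwards [ae_unifPi_mem_Icc n] with u hu
  exact (le_inducedMean (fun i => ⟨ha (hx i), hD.1 (hx i)⟩) fun i => (hu i).2).trans
    (inducedMean_le_bfun hD (fun i => (hu i).1) (self_mem_SsetD hx))

end AndersonBound

/-- Reduction to, and improvement over, Anderson's bound on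
`D⁺ = [a,b]`: with `T(y) = m_{D⁺}(y, ℓ)` and `i₀` the least (sorted) index with
`ℓ_{(i₀)} > 0`, (i) if `a ≤ b - (b - m_{D⁺}(x,ℓ))/ℓ_{(i₀)}` then
`b^α_{D⁺,T}(x) = m_{D⁺}(x,ℓ)`; (ii) if `a > b - (b - m_{D⁺}(x,ℓ))/ℓ_{(i₀)}` and
`n > i₀`, then `b^α_{D⁺,T}(x) < m_{D⁺}(x,ℓ)`. -/
theorem stmt19 {n : ℕ} (hn : 0 < n) (a b : ℝ) (hab : a < b)
    (α : ℝ) (hα : α ∈ Set.Ioo (0:ℝ) 1)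
    (ℓ : Fin n → ℝ) (hℓ : ∀ i, ℓ i ∈ Set.Icc (0:ℝ) 1)
    (i₀ : Fin n) (hi₀pos : 0 < sortedVec ℓ i₀)
    (hi₀min : ∀ j : Fin n, j < i₀ → sortedVec ℓ j ≤ 0)
    (hcov : unifPi n {u | ∀ i : Fin n, sortedVec ℓ i ≤ sortedVec u i}
      = ENNReal.ofReal (1 - α)) :
    ∀ x : Fin n → ℝ, (∀ i, x i ∈ Set.Icc a b) →
      (a ≤ b - (b - inducedMean b x ℓ) / sortedVec ℓ i₀ →
        ucb (Set.Icc a b) (fun y => inducedMean b y ℓ) α x = inducedMean b x ℓ) ∧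
      (b - (b - inducedMean b x ℓ) / sortedVec ℓ i₀ < a → (i₀ : ℕ) + 1 < n →
        ucb (Set.Icc a b) (fun y => inducedMean b y ℓ) α x < inducedMean b x ℓ) := by
  have hα1 : α < 1 := hα.2
  have hD : IsLUB (Icc a b) b := isLUB_Icc hab.le
  have hℓ0 : ∀ i, 0 ≤ ℓ i := fun i => (hℓ i).1
  intro x hx
  refine ⟨fun hle => ?_, fun hlt _ => ?_⟩
  · have hm : 0 ≤ b - inducedMean b x ℓ :=
      sub_nonneg.2 (inducedMean_le (fun i => (hx i).2) hℓ0)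
    refine ucb_inducedMean_eq hα1 hD (right_mem_Icc.2 hab.le) hx hℓ0 hi₀pos hi₀min hcov
      fun i hi => ?_
    have hi₀i : sortedVec ℓ i₀ ≤ sortedVec ℓ i := monotone_sortedVec ℓ hi
    exact ⟨hle.trans (sub_le_sub_left (div_le_div_of_nonneg_left hm hi₀pos hi₀i) b),
      sub_le_self b (div_nonneg hm (hi₀pos.le.trans hi₀i))⟩
  · exact ucb_inducedMean_lt hα1 hD (fun _ hy => hy.1) hx hi₀pos hi₀min hcov hlt
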